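/- arXiv:2512.18744 — 8 statements merged into one kernel-verified Lean document; each statement's English description precedes it below -/
import Mathlib

section
/- Let N ≥ 1 be an integer, let ℏ be a positive real number, let Λ ∈ ℂ with Λ ≠ 0, and fix L ∈ ℂ with exp(L) = ℏ/Λ. Let τ_1,…,τ_N ∈ ℂ and set t(λ) = ∏_{k=1}^N (λ − τ_k). Suppose K : ℂ → ℂ satisfies K(λ − iℏ) = K(λ) − Λ^{2N} · K(λ + iℏ)/(t(λ)·t(λ + iℏ)) for every λ ∈ ℂ with t(λ)·t(λ + iℏ) ≠ 0. Define Q⁺(λ) = exp(iNλL/ℏ − Nπλ/ℏ) · K(λ) · ∏_{k=1}^N Γ(1 − i(λ − τ_k)/ℏ)⁻¹, where Γ is the complex Gamma function. Then for every λ ∈ ℂ such that t(λ) ≠ 0, t(λ + iℏ) ≠ 0, and i(λ − τ_k)/ℏ is not an integer for any k, one has the Baxter equation t(λ)·Q⁺(λ) = Λ^N·( i^N·Q⁺(λ + iℏ) + i^{−N}·Q⁺(λ − iℏ) ). -/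
/-!
Write `Q⁺ = P · K`, where `P` collects the exponential and the reciprocal Gamma factors. The
functional equation `1/Γ(s) = s/Γ(s+1)`, valid for all complex `s`, together with
`exp L = ℏ/Λ` and `exp (iπN) = (-1)^N`, gives the first-order recursion
`P(λ - iℏ) = (i/Λ)^N · t(λ) · P(λ)` (`baxterPrefactor_sub`). Using it at `λ` and at `λ + iℏ`
turns the Baxter equation into `P(λ) · t(λ)` times the difference equation assumed for `K`.
-/

/-- The factor `P(λ) = exp(iNλL/ℏ - Nπλ/ℏ) · ∏ₖ Γ(1 - i(λ - τₖ)/ℏ)⁻¹` of `Q⁺` that does not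
involve `K`. -/
noncomputable def baxterPrefactor (N : ℕ) (ℏ : ℝ) (L : ℂ) (τ : Fin N → ℂ) (lam : ℂ) : ℂ :=
  Complex.exp (Complex.I * (N : ℂ) * lam * L / (ℏ : ℂ) -
      (N : ℂ) * (Real.pi : ℂ) * lam / (ℏ : ℂ)) *
    ∏ k, (Complex.Gamma (1 - Complex.I * (lam - τ k) / (ℏ : ℂ)))⁻¹

/-- The first-order recursion for the prefactor. No genericity of `lam` is needed, since `1/Γ` is
entire and Mathlib's convention `Γ = 0` at the poles makes `Γ⁻¹` agree with it everywhere. -/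
lemma baxterPrefactor_sub (N : ℕ) (ℏ : ℝ) (hℏ : 0 < ℏ) (Λ : ℂ) (hΛ : Λ ≠ 0) (L : ℂ)
    (hL : Complex.exp L = (ℏ : ℂ) / Λ) (τ : Fin N → ℂ) (lam : ℂ) :
    baxterPrefactor N ℏ L τ (lam - Complex.I * (ℏ : ℂ)) =
      (Complex.I / Λ) ^ N * (∏ k, (lam - τ k)) * baxterPrefactor N ℏ L τ lam := by
  have hh : (ℏ : ℂ) ≠ 0 := by exact_mod_cast hℏ.ne'
  have hexp : Complex.exp (Complex.I * (N : ℂ) * (lam - Complex.I * (ℏ : ℂ)) * L / (ℏ : ℂ) -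
      (N : ℂ) * (Real.pi : ℂ) * (lam - Complex.I * (ℏ : ℂ)) / (ℏ : ℂ)) =
      (-((ℏ : ℂ) / Λ)) ^ N * Complex.exp (Complex.I * (N : ℂ) * lam * L / (ℏ : ℂ) -
      (N : ℂ) * (Real.pi : ℂ) * lam / (ℏ : ℂ)) := by
    have hbase : -((ℏ : ℂ) / Λ) = Complex.exp (L + Real.pi * Complex.I) := by
      rw [Complex.exp_add, hL, Complex.exp_pi_mul_I]; ring
    rw [hbase, ← Complex.exp_nat_mul, ← Complex.exp_add]
    congr 1
    field_simp
    linear_combination (-(N : ℂ) * ℏ * L) * Complex.I_sq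
  have hGamma : ∀ k, (Complex.Gamma
      (1 - Complex.I * (lam - Complex.I * (ℏ : ℂ) - τ k) / (ℏ : ℂ)))⁻¹ =
      (-Complex.I / ℏ) * (lam - τ k) *
        (Complex.Gamma (1 - Complex.I * (lam - τ k) / (ℏ : ℂ)))⁻¹ := by
    intro k
    have h1 : 1 - Complex.I * (lam - Complex.I * (ℏ : ℂ) - τ k) / (ℏ : ℂ) =
        (-Complex.I / ℏ) * (lam - τ k) := by
      field_simp
      linear_combination (ℏ : ℂ) * Complex.I_sq
    have h2 : 1 - Complex.I * (lam - τ k) / (ℏ : ℂ) = (-Complex.I / ℏ) * (lam - τ k) + 1 := by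
      ring
    rw [h1, h2, Complex.one_div_Gamma_eq_self_mul_one_div_Gamma_add_one]
  have hconst : Complex.I / Λ = -((ℏ : ℂ) / Λ) * (-Complex.I / ℏ) := by field_simp
  unfold baxterPrefactor
  rw [hexp, Finset.prod_congr rfl fun k _ => hGamma k, Finset.prod_mul_distrib,
    Finset.prod_mul_distrib, Finset.prod_const, Finset.card_univ, Fintype.card_fin, hconst,
    mul_pow]
  ring

/-- The Gutzwiller-type solution `Q⁺` built from a solution `K` of the
auxiliary difference equation solves the Baxter equation of the closed Toda chain. -/
theorem baxter_solution_Qplus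
    (N : ℕ) (hN : 1 ≤ N) (ℏ : ℝ) (hℏ : 0 < ℏ)
    (Λ : ℂ) (hΛ : Λ ≠ 0) (L : ℂ) (hL : Complex.exp L = (ℏ : ℂ) / Λ)
    (τ : Fin N → ℂ) (t : ℂ → ℂ) (ht : ∀ lam : ℂ, t lam = ∏ k, (lam - τ k))
    (K : ℂ → ℂ)
    (hK : ∀ lam : ℂ, t lam * t (lam + Complex.I * (ℏ : ℂ)) ≠ 0 →
      K (lam - Complex.I * (ℏ : ℂ)) =
        K lam - Λ ^ (2 * N) * K (lam + Complex.I * (ℏ : ℂ)) /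
          (t lam * t (lam + Complex.I * (ℏ : ℂ))))
    (Q : ℂ → ℂ)
    (hQ : ∀ lam : ℂ, Q lam =
      Complex.exp (Complex.I * (N : ℂ) * lam * L / (ℏ : ℂ) -
          (N : ℂ) * (Real.pi : ℂ) * lam / (ℏ : ℂ)) * K lam *
        ∏ k, (Complex.Gamma (1 - Complex.I * (lam - τ k) / (ℏ : ℂ)))⁻¹) :
    ∀ lam : ℂ, t lam ≠ 0 → t (lam + Complex.I * (ℏ : ℂ)) ≠ 0 →
      (∀ k : Fin N, ∀ m : ℤ, Complex.I * (lam - τ k) / (ℏ : ℂ) ≠ (m : ℂ)) →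
      t lam * Q lam =
        Λ ^ N * (Complex.I ^ N * Q (lam + Complex.I * (ℏ : ℂ)) +
          Complex.I ^ (-(N : ℤ)) * Q (lam - Complex.I * (ℏ : ℂ))) := by
  intro lam h0 h1 _
  have hQP : ∀ x, Q x = baxterPrefactor N ℏ L τ x * K x := by
    intro x
    rw [hQ, baxterPrefactor]
    ring
  have hP := baxterPrefactor_sub N ℏ hℏ Λ hΛ L hL τ lam
  have hP' := baxterPrefactor_sub N ℏ hℏ Λ hΛ L hL τ (lam + Complex.I * (ℏ : ℂ))
  rw [← ht] at hP hP'
  rw [add_sub_cancel_right] at hP'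
  rw [hQP, hQP, hQP, hP, hK lam (mul_ne_zero h0 h1), hP', zpow_neg, zpow_natCast, div_pow]
  have hI : Complex.I ^ N ≠ 0 := pow_ne_zero _ Complex.I_ne_zero
  have hΛN : Λ ^ N ≠ 0 := pow_ne_zero _ hΛ
  rw [mul_comm 2 N, pow_mul]
  field_simp
  ring
end

section
/- Let N ≥ 1 be an integer, let ℏ be a positive real number, let Λ ∈ ℂ with Λ ≠ 0, and fix L ∈ ℂ with exp(L) = ℏ/Λ. Let τ_1,…,τ_N ∈ ℂ and set t(λ) = ∏_{k=1}^N (λ − τ_k). Suppose K : ℂ → ℂ satisfies K(λ + iℏ) = K(λ) − Λ^{2N} · K(λ − iℏ)/(t(λ)·t(λ − iℏ)) for every λ ∈ ℂ with t(λ)·t(λ − iℏ) ≠ 0. Define Q⁻(λ) = exp(−iNλL/ℏ − Nπλ/ℏ) · K(λ) · ∏_{k=1}^N Γ(1 + i(λ − τ_k)/ℏ)⁻¹, where Γ is the complex Gamma function. Then for every λ ∈ ℂ such that t(λ) ≠ 0, t(λ − iℏ) ≠ 0, and i(λ − τ_k)/ℏ is not an integer for any k, one has the Baxter equation t(λ)·Q⁻(λ)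 = Λ^N·( i^N·Q⁻(λ + iℏ) + i^{−N}·Q⁻(λ − iℏ) ). -/
/-!
With `z k = I (lam - τ k) / ℏ`, the shift `lam ↦ lam ± I ℏ` sends `z k` to `z k ∓ 1`. The functional
equation `Γ (z + 1) = z Γ z` then shows that the Gamma product of `Q` is multiplied by
`(I / ℏ) ^ N * t lam` under the shift up and divided by `(I / ℏ) ^ N * t (lam - I ℏ)` under the
shift down, while the exponential prefactor is multiplied by `(-ℏ / Λ) ^ (± N)`. All powers of
`I`, `-1` and `ℏ` cancel, and the Baxter equation becomes
`t lam * K (lam + I ℏ) + Λ ^ (2 N) * K (lam - I ℏ) / t (lam - I ℏ) = t lam * K lam`,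
which is the difference equation for `K`.
-/

/-- The Gutzwiller-type solution `Q⁻` built from a solution `K` of the
auxiliary difference equation solves the Baxter equation of the closed Toda chain. -/
theorem baxter_solution_Qminus
    (N : ℕ) (hN : 1 ≤ N) (ℏ : ℝ) (hℏ : 0 < ℏ)
    (Λ : ℂ) (hΛ : Λ ≠ 0) (L : ℂ) (hL : Complex.exp L = (ℏ : ℂ) / Λ)
    (τ : Fin N → ℂ) (t : ℂ → ℂ) (ht : ∀ lam : ℂ, t lam = ∏ k, (lam - τ k))
    (K : ℂ → ℂ)
    (hK : ∀ lam : ℂ, t lam * t (lam - Complex.I * (ℏ : ℂ)) ≠ 0 →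
      K (lam + Complex.I * (ℏ : ℂ)) =
        K lam - Λ ^ (2 * N) * K (lam - Complex.I * (ℏ : ℂ)) /
          (t lam * t (lam - Complex.I * (ℏ : ℂ))))
    (Q : ℂ → ℂ)
    (hQ : ∀ lam : ℂ, Q lam =
      Complex.exp (-(Complex.I * (N : ℂ) * lam * L / (ℏ : ℂ)) -
          (N : ℂ) * (Real.pi : ℂ) * lam / (ℏ : ℂ)) * K lam *
        ∏ k, (Complex.Gamma (1 + Complex.I * (lam - τ k) / (ℏ : ℂ)))⁻¹) :
    ∀ lam : ℂ, t lam ≠ 0 → t (lam - Complex.I * (ℏ : ℂ)) ≠ 0 →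
      (∀ k : Fin N, ∀ m : ℤ, Complex.I * (lam - τ k) / (ℏ : ℂ) ≠ (m : ℂ)) →
      t lam * Q lam =
        Λ ^ N * (Complex.I ^ N * Q (lam + Complex.I * (ℏ : ℂ)) +
          Complex.I ^ (-(N : ℤ)) * Q (lam - Complex.I * (ℏ : ℂ))) := by
  intro lam h0 h1 hz
  have hh : (ℏ : ℂ) ≠ 0 := by exact_mod_cast hℏ.ne'
  have hI := Complex.I_ne_zero
  set E : ℂ → ℂ := fun x => Complex.exp (-(Complex.I * (N : ℂ) * x * L / (ℏ : ℂ)) -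
          (N : ℂ) * (Real.pi : ℂ) * x / (ℏ : ℂ)) with hE
  set P : ℂ → ℂ := fun x => ∏ k, (Complex.Gamma (1 + Complex.I * (x - τ k) / (ℏ : ℂ)))⁻¹ with hP
  have hQ' : ∀ x, Q x = E x * K x * P x := hQ
  have hstep : Complex.exp (N * (L - Real.pi * Complex.I)) = (-(ℏ : ℂ) / Λ) ^ N := by
    rw [Complex.exp_nat_mul, Complex.exp_sub, hL, Complex.exp_pi_mul_I]
    congr 1
    ring
  have hEp : E (lam + Complex.I * ℏ) = E lam * (-(ℏ : ℂ) / Λ) ^ N := by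
    rw [← hstep]
    simp only [hE]
    rw [← Complex.exp_add]
    congr 1
    field_simp
    linear_combination (-(N : ℂ) * L * ℏ) * Complex.I_sq
  have hEm : E (lam - Complex.I * ℏ) * (-(ℏ : ℂ) / Λ) ^ N = E lam := by
    rw [← hstep]
    simp only [hE]
    rw [← Complex.exp_add]
    congr 1
    field_simp
    linear_combination ((N : ℂ) * L * ℏ) * Complex.I_sq
  have hconst : ∀ x, (Complex.I / ℏ) ^ N * t x = ∏ k, (Complex.I * (x - τ k) / (ℏ : ℂ)) := by
    intro x
    have hcard : (Complex.I / (ℏ : ℂ)) ^ N = ∏ _k : Fin N, (Complex.I / (ℏ : ℂ)) := by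
      rw [Finset.prod_const, Finset.card_univ, Fintype.card_fin]
    rw [ht, hcard, ← Finset.prod_mul_distrib]
    exact Finset.prod_congr rfl fun k _ => by ring
  have hPp : P (lam + Complex.I * ℏ) = P lam * ((Complex.I / ℏ) ^ N * t lam) := by
    rw [hconst]
    simp only [hP]
    rw [← Finset.prod_mul_distrib]
    refine Finset.prod_congr rfl fun k _ => ?_
    have hzk : Complex.I * (lam - τ k) / (ℏ : ℂ) ≠ 0 := by simpa using hz k 0
    have harg : 1 + Complex.I * (lam + Complex.I * ℏ - τ k) / (ℏ : ℂ)
        = Complex.I * (lam - τ k) / (ℏ : ℂ) := by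
      field_simp
      linear_combination (ℏ : ℂ) * Complex.I_sq
    rw [harg, add_comm 1, Complex.Gamma_add_one _ hzk, mul_inv, mul_right_comm,
      inv_mul_cancel₀ hzk, one_mul]
  have hPm : P (lam - Complex.I * ℏ) * ((Complex.I / ℏ) ^ N * t (lam - Complex.I * ℏ)) = P lam := by
    rw [hconst]
    simp only [hP]
    rw [← Finset.prod_mul_distrib]
    refine Finset.prod_congr rfl fun k _ => ?_
    have harg : Complex.I * (lam - Complex.I * ℏ - τ k) / (ℏ : ℂ)
        = 1 + Complex.I * (lam - τ k) / (ℏ : ℂ) := by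
      field_simp
      linear_combination (-(ℏ : ℂ)) * Complex.I_sq
    have hzk : 1 + Complex.I * (lam - τ k) / (ℏ : ℂ) ≠ 0 := by
      intro h
      apply hz k (-1)
      push_cast
      linear_combination h
    rw [harg, add_comm 1 (1 + _), Complex.Gamma_add_one _ hzk, mul_inv, mul_right_comm,
      inv_mul_cancel₀ hzk, one_mul]
  -- The scalar bookkeeping: both shifted terms carry the factor `(-I ^ 2) ^ N = 1`.
  have hc : Λ ^ N * Complex.I ^ N * (-(ℏ : ℂ) / Λ) ^ N * (Complex.I / ℏ) ^ N = 1 := by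
    rw [← mul_pow, ← mul_pow, ← mul_pow]
    have hbase : Λ * Complex.I * (-(ℏ : ℂ) / Λ) * (Complex.I / ℏ) = 1 := by
      field_simp
      simp
    rw [hbase, one_pow]
  have hkey := hK lam (mul_ne_zero h0 h1)
  have hiN : Complex.I ^ (-(N : ℤ)) * Complex.I ^ N = 1 := by
    rw [zpow_neg, zpow_natCast, inv_mul_cancel₀ (pow_ne_zero _ hI)]
  have hkey' : t lam * K lam = t lam * K (lam + Complex.I * ℏ)
      + Λ ^ (2 * N) * K (lam - Complex.I * ℏ) / t (lam - Complex.I * ℏ) := by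
    rw [hkey]
    field_simp
    ring
  have hm : Λ ^ N * Complex.I ^ (-(N : ℤ)) * (E (lam - Complex.I * ℏ) * P (lam - Complex.I * ℏ))
      = Λ ^ (2 * N) / t (lam - Complex.I * ℏ) * (E lam * P lam) := by
    rw [← hEm, ← hPm, eq_comm, div_mul_eq_mul_div, div_eq_iff h1]
    set a := Complex.I ^ (-(N : ℤ))
    set e := E (lam - Complex.I * ℏ)
    set p := P (lam - Complex.I * ℏ)
    set u := t (lam - Complex.I * ℏ)
    set b := (-(ℏ : ℂ) / Λ) ^ N
    set c := (Complex.I / (ℏ : ℂ)) ^ N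
    rw [two_mul, pow_add]
    linear_combination (Λ ^ N * e * p * u * a) * hc - (Λ ^ N * Λ ^ N * e * p * u * b * c) * hiN
  rw [hQ', hQ', hQ', hEp, hPp]
  linear_combination (E lam * P lam) * hkey' - K (lam - Complex.I * ℏ) * hm
    - (E lam * P lam * t lam * K (lam + Complex.I * ℏ)) * hc
end

section
/- Let N ≥ 1 be an integer, let ℏ ∈ ℂ, let Λ ∈ ℂ with Λ ≠ 0, and let t : ℂ → ℂ be any function. Suppose Q⁺, Q⁻ : ℂ → ℂ both solve the Baxter equation t(λ)·Q(λ) = Λ^N·( i^N·Q(λ + iℏ) + i^{−N}·Q(λ − iℏ) ) for all λ ∈ ℂ. Define the quantum Wronskian W(λ) = Q⁺(λ)·Q⁻(λ + iℏ) − Q⁻(λ)·Q⁺(λ + iℏ). Then W(λ + iℏ) = (−1)^N·W(λ) for all λ ∈ ℂ. In particular, if W(λ₀) = 0 for some λ₀, then W(λ₀ + iℏ·n) = 0 for every integer n. -/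
/-!
Eliminating `t` between the two Baxter equations at `λ + iℏ` (multiply the one for `Q⁺` by
`Q⁻(λ + iℏ)` and vice versa, then subtract) leaves `Λ^N i^N W(λ + iℏ) = Λ^N i^(-N) W(λ)`.
Since `i^(-N) = (-1)^N i^N` and `Λ ≠ 0`, this is the quasi-periodicity. As `(-1)^N ≠ 0`, zeros of
`W` propagate by `iℏ` in both directions, hence by induction along `λ₀ + iℏℤ`.
-/

/-- The quantum Wronskian of two solutions of the Baxter equation is
quasi-periodic, `W(λ + iℏ) = (−1)^N W(λ)`, and hence its zeros propagate along `λ₀ + iℏℤ`. -/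
theorem quantum_wronskian_quasi_periodic
    (N : ℕ) (hN : 1 ≤ N) (ℏ : ℂ) (Λ : ℂ) (hΛ : Λ ≠ 0) (t : ℂ → ℂ)
    (Qp Qm : ℂ → ℂ)
    (hQp : ∀ lam : ℂ, t lam * Qp lam =
      Λ ^ N * (Complex.I ^ N * Qp (lam + Complex.I * ℏ) +
        Complex.I ^ (-(N : ℤ)) * Qp (lam - Complex.I * ℏ)))
    (hQm : ∀ lam : ℂ, t lam * Qm lam =
      Λ ^ N * (Complex.I ^ N * Qm (lam + Complex.I * ℏ) +
        Complex.I ^ (-(N : ℤ)) * Qm (lam - Complex.I * ℏ)))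
    (W : ℂ → ℂ)
    (hW : ∀ lam : ℂ, W lam =
      Qp lam * Qm (lam + Complex.I * ℏ) - Qm lam * Qp (lam + Complex.I * ℏ)) :
    (∀ lam : ℂ, W (lam + Complex.I * ℏ) = (-1 : ℂ) ^ N * W lam) ∧
    (∀ lam₀ : ℂ, W lam₀ = 0 → ∀ n : ℤ, W (lam₀ + Complex.I * ℏ * (n : ℂ)) = 0) := by
  have hJ : (Complex.I ^ N : ℂ) ≠ 0 := pow_ne_zero _ Complex.I_ne_zero
  have hK : Complex.I ^ (-(N : ℤ)) = (-1 : ℂ) ^ N * Complex.I ^ N := by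
    rw [zpow_neg, zpow_natCast, ← inv_pow, Complex.inv_I, ← mul_pow, neg_one_mul]
  have step : ∀ lam : ℂ, W (lam + Complex.I * ℏ) = (-1 : ℂ) ^ N * W lam := by
    intro lam
    have hp := hQp (lam + Complex.I * ℏ)
    have hm := hQm (lam + Complex.I * ℏ)
    rw [add_sub_cancel_right, hK] at hp hm
    rw [hW, hW]
    apply mul_left_cancel₀ (mul_ne_zero (pow_ne_zero N hΛ) hJ)
    linear_combination Qm (lam + Complex.I * ℏ) * hp - Qp (lam + Complex.I * ℏ) * hm
  refine ⟨step, fun lam₀ h₀ n => ?_⟩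
  induction n using Int.induction_on with
  | zero => simpa using h₀
  | succ k ih =>
    have h := step (lam₀ + Complex.I * ℏ * ((k : ℤ) : ℂ))
    rw [ih, mul_zero] at h
    rw [← h]
    congr 1
    push_cast
    ring
  | pred k ih =>
    have h := step (lam₀ + Complex.I * ℏ * ((-(k : ℤ) - 1 : ℤ) : ℂ))
    have e : lam₀ + Complex.I * ℏ * ((-(k : ℤ) - 1 : ℤ) : ℂ) + Complex.I * ℏ
        = lam₀ + Complex.I * ℏ * ((-(k : ℤ) : ℤ) : ℂ) := by
      push_cast
      ring
    rw [e, ih] at h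
    exact (mul_eq_zero.mp h.symm).resolve_left (pow_ne_zero N (neg_ne_zero.mpr one_ne_zero))
end

section
/- Let N ≥ 1 be an integer, let c_0,…,c_N be real numbers, and let Λ, ℏ be real numbers. Define the operator B on functions f : ℂ → ℂ by (B f)(z) = −iℏ·z·f′(z). Suppose χ : ℂ → ℂ is holomorphic on ℂ∖{0} and satisfies, for all z ≠ 0, the equation ∑_{k=0}^N c_k·(B^{∘k}χ)(z) = Λ^N·( i^N·z + i^{−N}·z^{−1} )·χ(z). Define ψ(z) = conj( χ( 1/conj(z) ) ). Then ψ is holomorphic on ℂ∖{0} and satisfies the same equation: ∑_{k=0}^N c_k·(B^{∘k}ψ)(z) = Λ^N·( i^N·z + i^{−N}·z^{−1} )·ψ(z) for all z ≠ 0. -/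
/-!
Write `R f` for the reflected function `z ↦ conj (f (1 / conj z))`. The chain rule gives
`z (R f)'(z) = -conj (w f'(w))` at `w = 1 / conj z`, and this sign is cancelled by the one coming
from `conj (-iℏ) = iℏ`; hence `B` commutes with `R` on functions holomorphic on the punctured plane
(`operB_reflect`), and so do its iterates (`operB_iterate_reflect`). Conjugating the equation for
`χ` at the point `w` therefore yields the left-hand side for `R χ` at `z`. On the right-hand side,
`conj (i ^ N) = i ^ (-N)`, so the two terms of the potential are exchanged and the potential is
preserved.
-/

/-- The operator `B f = −iℏ·z·f′`, i.e. `−iℏ z∂_z`. -/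
noncomputable def operB (ℏ : ℂ) (f : ℂ → ℂ) : ℂ → ℂ :=
  fun z => -Complex.I * ℏ * (z * deriv f z)

open scoped ComplexConjugate

/-- The antiholomorphic inversion `z ↦ 1 / conj z` combined with complex conjugation of values. -/
noncomputable def reflect (f : ℂ → ℂ) : ℂ → ℂ := fun z => conj (f (conj z)⁻¹)

lemma isOpen_punctured : IsOpen {z : ℂ | z ≠ 0} := isOpen_ne

lemma inv_conj_ne_zero {z : ℂ} (hz : z ≠ 0) : (conj z)⁻¹ ≠ 0 :=
  inv_ne_zero ((map_ne_zero _).2 hz)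

lemma hasDerivAt_reflect {f : ℂ → ℂ} (hf : DifferentiableOn ℂ f {z : ℂ | z ≠ 0}) {z : ℂ}
    (hz : z ≠ 0) :
    HasDerivAt (reflect f) (conj (deriv f (conj z)⁻¹) * (-(z ^ 2)⁻¹)) z := by
  have h1 : HasDerivAt f (deriv f (conj z)⁻¹) (conj z)⁻¹ :=
    (hf.differentiableAt (isOpen_punctured.mem_nhds (inv_conj_ne_zero hz))).hasDerivAt
  have h2 := h1.conj_conj
  rw [map_inv₀, Complex.conj_conj] at h2
  have h3 := h2.comp z (hasDerivAt_inv hz)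
  -- `reflect f` is the holomorphic function `conj ∘ f ∘ conj` composed with inversion.
  have h4 : reflect f = (conj ∘ f ∘ conj) ∘ Inv.inv := by
    funext w
    simp [reflect]
  rw [h4]
  exact h3

lemma differentiableOn_reflect {f : ℂ → ℂ} (hf : DifferentiableOn ℂ f {z : ℂ | z ≠ 0}) :
    DifferentiableOn ℂ (reflect f) {z : ℂ | z ≠ 0} :=
  fun _ hz => (hasDerivAt_reflect hf hz).differentiableAt.differentiableWithinAt

lemma operB_reflect (ℏ : ℝ) {f : ℂ → ℂ} (hf : DifferentiableOn ℂ f {z : ℂ | z ≠ 0}) {z : ℂ}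
    (hz : z ≠ 0) : operB ℏ (reflect f) z = reflect (operB ℏ f) z := by
  simp only [operB, (hasDerivAt_reflect hf hz).deriv]
  simp only [reflect, operB, map_mul, map_neg, Complex.conj_I, Complex.conj_ofReal, map_inv₀,
    Complex.conj_conj]
  field_simp

lemma differentiableOn_operB_iterate (ℏ : ℂ) {f : ℂ → ℂ}
    (hf : DifferentiableOn ℂ f {z : ℂ | z ≠ 0}) (k : ℕ) :
    DifferentiableOn ℂ ((operB ℏ)^[k] f) {z : ℂ | z ≠ 0} := by
  induction k with
  | zero => exact hf
  | succ k ih =>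
    rw [Function.iterate_succ_apply']
    exact (differentiableOn_id.mul (ih.deriv isOpen_punctured)).const_mul _

lemma operB_iterate_reflect (ℏ : ℝ) {f : ℂ → ℂ} (hf : DifferentiableOn ℂ f {z : ℂ | z ≠ 0})
    (k : ℕ) : ∀ z : ℂ, z ≠ 0 →
      (operB ℏ)^[k] (reflect f) z = reflect ((operB ℏ)^[k] f) z := by
  induction k with
  | zero => exact fun _ _ => rfl
  | succ k ih =>
    intro z hz
    rw [Function.iterate_succ_apply', Function.iterate_succ_apply',
      ← operB_reflect ℏ (differentiableOn_operB_iterate ℏ hf k) hz]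
    -- The derivative at `z` only depends on values near `z`, where the inductive hypothesis holds.
    have hev : (operB ℏ)^[k] (reflect f) =ᶠ[nhds z] reflect ((operB ℏ)^[k] f) :=
      Filter.eventually_of_mem (isOpen_punctured.mem_nhds hz) ih
    simp only [operB, hev.deriv_eq]

/-- For real coefficients `c_k`, real `Λ` and real `ℏ`, the oper equation
is invariant under the antiholomorphic inversion `z ↦ 1/conj z` combined with overall
complex conjugation. -/
theorem oper_equation_antiholomorphic_symmetry
    (N : ℕ) (hN : 1 ≤ N) (c : ℕ → ℝ) (Λ ℏ : ℝ)
    (χ : ℂ → ℂ)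
    (hχdiff : DifferentiableOn ℂ χ {z : ℂ | z ≠ 0})
    (hχ : ∀ z : ℂ, z ≠ 0 →
      ∑ k ∈ Finset.range (N + 1), (c k : ℂ) * (operB (ℏ : ℂ))^[k] χ z =
        (Λ : ℂ) ^ N * (Complex.I ^ N * z + Complex.I ^ (-(N : ℤ)) * z⁻¹) * χ z)
    (ψ : ℂ → ℂ)
    (hψ : ∀ z : ℂ, ψ z = (starRingEnd ℂ) (χ ((starRingEnd ℂ) z)⁻¹)) :
    DifferentiableOn ℂ ψ {z : ℂ | z ≠ 0} ∧
    ∀ z : ℂ, z ≠ 0 →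
      ∑ k ∈ Finset.range (N + 1), (c k : ℂ) * (operB (ℏ : ℂ))^[k] ψ z =
        (Λ : ℂ) ^ N * (Complex.I ^ N * z + Complex.I ^ (-(N : ℤ)) * z⁻¹) * ψ z := by
  obtain rfl : ψ = reflect χ := funext hψ
  refine ⟨differentiableOn_reflect hχdiff, fun z hz => ?_⟩
  have h := congrArg conj (hχ _ (inv_conj_ne_zero hz))
  have hI : conj (Complex.I ^ N) = Complex.I ^ (-(N : ℤ)) := by
    rw [map_pow, Complex.conj_I, zpow_neg, zpow_natCast, ← inv_pow, Complex.inv_I]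
  have hI' : conj (Complex.I ^ (-(N : ℤ))) = Complex.I ^ N := by
    rw [← hI, Complex.conj_conj]
  calc ∑ k ∈ Finset.range (N + 1), (c k : ℂ) * (operB (ℏ : ℂ))^[k] (reflect χ) z
      = conj (∑ k ∈ Finset.range (N + 1),
          (c k : ℂ) * (operB (ℏ : ℂ))^[k] χ (conj z)⁻¹) := by
        rw [map_sum]
        refine Finset.sum_congr rfl fun k _ => ?_
        rw [operB_iterate_reflect ℏ hχdiff k z hz, map_mul, Complex.conj_ofReal]
        rfl
    _ = _ := by
        rw [h, map_mul, map_mul, map_add, map_mul, map_mul, hI, hI', map_pow,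
          Complex.conj_ofReal, inv_inv, map_inv₀, Complex.conj_conj, add_comm]
        rfl
end

section
/- Let N ≥ 2 be an integer, let k be an integer with 0 ≤ k ≤ 2N−1, and let s_1,…,s_{N−1} ∈ ℂ be arbitrary Stokes constants, extended to negative indices by s_{i−N} := (−1)^{N−1}·s_i. Then the Stokes matrix 𝒮_k has determinant 1. -/
/-!
Call an index `n` active if the residue of `k - 2n` modulo `2N` lies in `{1,…,N-1}`. A nonzero
off-diagonal entry at `(m, n)` forces `n` to be active and `m ≡ k - n (mod N)`, so that
`k - 2m ≡ -(k - 2n) (mod 2N)` has its residue in `{N+1,…,2N-1}` and `m` is not active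
(`not_activeIndex_of_add`). Ordering the inactive indices before the active ones therefore makes
the matrix block upper triangular with identity diagonal blocks, whatever the values of `s`.
-/

/-- The Stokes matrix `𝒮_k`: `N×N` matrix with `1` on the diagonal, entry `s_{n−m}` at
position `(m,n)` when `m ≡ k−n (mod N)` and the residue of `k−2n` modulo `2N` lies in
`{1,…,N−1}`, and `0` otherwise. -/
def StokesMatrix (N k : ℕ) (s : ℤ → ℂ) : Matrix (Fin N) (Fin N) ℂ :=
  Matrix.of fun m n =>
    if m = n then 1
    else if ((m : ℤ) + (n : ℤ) - (k : ℤ)) % (N : ℤ) = 0 ∧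
        1 ≤ ((k : ℤ) - 2 * (n : ℤ)) % (2 * (N : ℤ)) ∧
        ((k : ℤ) - 2 * (n : ℤ)) % (2 * (N : ℤ)) ≤ (N : ℤ) - 1 then
      s ((n : ℤ) - (m : ℤ))
    else 0

/-- The index `n` is active if column `n` of `𝒮_k` is allowed an off-diagonal entry. -/
def ActiveIndex (N k : ℕ) (n : ℤ) : Prop :=
  1 ≤ ((k : ℤ) - 2 * n) % (2 * (N : ℤ)) ∧ ((k : ℤ) - 2 * n) % (2 * (N : ℤ)) ≤ (N : ℤ) - 1

/-- The reflection `n ↦ k - n` modulo `N` sends active indices to inactive ones, since it negates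
`k - 2n` modulo `2N`. -/
lemma not_activeIndex_of_add {N k : ℕ} {m n : ℤ}
    (hmn : (m + n - (k : ℤ)) % (N : ℤ) = 0) (hn : ActiveIndex N k n) :
    ¬ ActiveIndex N k m := by
  obtain ⟨c, hc⟩ := Int.dvd_of_emod_eq_zero hmn
  obtain ⟨h1, h2⟩ := hn
  have hdiv := Int.emod_add_mul_ediv ((k : ℤ) - 2 * n) (2 * (N : ℤ))
  set r := ((k : ℤ) - 2 * n) % (2 * (N : ℤ))
  set q := ((k : ℤ) - 2 * n) / (2 * (N : ℤ))
  have hm : (k : ℤ) - 2 * m = (2 * N - r) + (2 * (N : ℤ)) * (-(q + c) - 1) := by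
    linear_combination hdiv - 2 * hc
  have hres : ((k : ℤ) - 2 * m) % (2 * (N : ℤ)) = 2 * N - r := by
    rw [hm, Int.add_mul_emod_self_left]
    exact Int.emod_eq_of_lt (by omega) (by omega)
  rintro ⟨-, h4⟩
  omega

lemma stokesMatrix_apply_eq_zero {N k : ℕ} {s : ℤ → ℂ} {m n : Fin N} (hne : m ≠ n)
    (h : ¬ (¬ ActiveIndex N k (m : ℕ) ∧ ActiveIndex N k (n : ℕ))) :
    StokesMatrix N k s m n = 0 := by
  simp only [StokesMatrix, Matrix.of_apply, if_neg hne]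
  exact if_neg fun hc => h ⟨not_activeIndex_of_add hc.1 hc.2, hc.2⟩

/-- every Stokes matrix `𝒮_k`, `0 ≤ k ≤ 2N−1`, has determinant `1`, where the
Stokes constants `s_1,…,s_{N−1}` are arbitrary and are extended to negative indices by
`s_{i−N} = (−1)^{N−1} s_i`. -/
theorem stokes_matrix_det_one
    (N : ℕ) (hN : 2 ≤ N) (k : ℕ) (hk : k ≤ 2 * N - 1)
    (s : ℤ → ℂ)
    (hs : ∀ i : ℤ, 1 ≤ i → i ≤ (N : ℤ) - 1 →
      s (i - (N : ℤ)) = (-1 : ℂ) ^ (N - 1) * s i) :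
    (StokesMatrix N k s).det = 1 := by
  classical
  let b : Fin N → ℕ := fun n => if ActiveIndex N k (n : ℕ) then 1 else 0
  have htri : (StokesMatrix N k s).BlockTriangular b := by
    intro m n hlt
    refine stokesMatrix_apply_eq_zero (by rintro rfl; exact lt_irrefl _ hlt) ?_
    rintro ⟨hm, hn⟩
    simp [b, hm, hn] at hlt
  rw [htri.det]
  refine Finset.prod_eq_one fun a _ => ?_
  have hblock : (StokesMatrix N k s).toSquareBlock b a = 1 := by
    ext ⟨m, hm⟩ ⟨n, hn⟩
    rw [Matrix.toSquareBlock_def, Matrix.of_apply, Matrix.one_apply]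
    by_cases hmn : m = n
    · subst hmn
      simp [StokesMatrix]
    · rw [if_neg (by simpa using hmn)]
      refine stokesMatrix_apply_eq_zero hmn ?_
      rintro ⟨hm', hn'⟩
      have hb : b m = b n := hm.trans hn.symm
      simp [b, hm', hn'] at hb
  rw [hblock, Matrix.det_one]
end

section
/- Let N ≥ 2 be an integer and let s_1,…,s_{N−1} ∈ ℂ be arbitrary Stokes constants, extended to negative indices by s_{i−N} := (−1)^{N−1}·s_i. Then 𝒮_0·𝒮_1·P_N = M_0, where 𝒮_0, 𝒮_1 are the Stokes matrices with k = 0 and k = 1, P_N is the twisted cyclic permutation matrix, and M_0 is the explicit monodromy matrix. -/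
/-- The twisted cyclic permutation matrix `P_N`: `[P_N]_{n+1,n} = 1` for `n = 0,…,N−2`,
`[P_N]_{0,N−1} = (−1)^{N−1}`, all other entries `0`. -/
def PermMat (N : ℕ) : Matrix (Fin N) (Fin N) ℂ :=
  Matrix.of fun i j =>
    if (i : ℕ) = (j : ℕ) + 1 then 1
    else if (i : ℕ) = 0 ∧ (j : ℕ) = N - 1 then (-1 : ℂ) ^ (N - 1)
    else 0

/-- The explicit monodromy matrix `M_0`: `[M_0]_{0,N−1} = (−1)^{N−1}`, `[M_0]_{n,n−1} = 1`
for `n = 1,…,N−1`, `[M_0]_{i,N−1−i} = s_{N−2i}` for `1 ≤ i ≤ ⌊(N−1)/2⌋`,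
`[M_0]_{i,N−i} = s_{N−2i+1}` for `1 ≤ i ≤ ⌊N/2⌋`, all other entries `0`. -/
def MonodromyMat (N : ℕ) (s : ℤ → ℂ) : Matrix (Fin N) (Fin N) ℂ :=
  Matrix.of fun i j =>
    if (i : ℕ) = 0 ∧ (j : ℕ) = N - 1 then (-1 : ℂ) ^ (N - 1)
    else if (i : ℕ) = (j : ℕ) + 1 then 1
    else if 1 ≤ (i : ℕ) ∧ (i : ℕ) ≤ (N - 1) / 2 ∧ (j : ℕ) = N - 1 - (i : ℕ) then
      s ((N : ℤ) - 2 * (i : ℤ))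
    else if 1 ≤ (i : ℕ) ∧ (i : ℕ) ≤ N / 2 ∧ (j : ℕ) = N - (i : ℕ) then
      s ((N : ℤ) - 2 * (i : ℤ) + 1)
    else 0

theorem stokes_zero_apply (N : ℕ) (s : ℤ → ℂ) (m n : Fin N) :
    StokesMatrix N 0 s m n = if m = n then 1
      else if (m : ℕ) + n = N ∧ N < 2 * (n : ℕ) then s ((N : ℤ) - 2 * m) else 0 := by
  have hm := m.isLt
  have hn := n.isLt
  have key : (((m : ℤ) + (n : ℤ) - ((0 : ℕ) : ℤ)) % (N : ℤ) = 0 ∧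
      1 ≤ (((0 : ℕ) : ℤ) - 2 * (n : ℤ)) % (2 * (N : ℤ)) ∧
      (((0 : ℕ) : ℤ) - 2 * (n : ℤ)) % (2 * (N : ℤ)) ≤ (N : ℤ) - 1) ↔
      ((m : ℕ) + n = N ∧ N < 2 * (n : ℕ)) := by
    rcases Nat.eq_zero_or_pos (n : ℕ) with h0 | h0
    · simp [h0]
    · have h1 : (((0 : ℕ) : ℤ) - 2 * (n : ℤ)) % (2 * (N : ℤ)) = 2 * N - 2 * n := by
        rw [← Int.add_emod_right, Int.emod_eq_of_lt] <;> push_cast <;> omega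
      have h2 : ((m : ℤ) + (n : ℤ) - ((0 : ℕ) : ℤ)) % (N : ℤ) = 0 ↔ (m : ℕ) + n = N := by
        constructor
        · intro h
          by_contra hne
          rcases lt_or_gt_of_ne hne with hlt | hgt
          · rw [Int.emod_eq_of_lt] at h <;> push_cast at * <;> omega
          · rw [← Int.sub_emod_right, Int.emod_eq_of_lt] at h <;> push_cast at * <;> omega
        · intro h
          have : (m : ℤ) + (n : ℤ) - ((0 : ℕ) : ℤ) = N := by push_cast; omega
          rw [this, Int.emod_self]
      rw [h1, h2]
      omega
  simp only [StokesMatrix, Matrix.of_apply]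
  simp only [key]
  split_ifs with h1 h2
  · rfl
  · congr 1
    omega
  · rfl

theorem stokes_one_apply (N : ℕ) (hN : 2 ≤ N) (s : ℤ → ℂ) (m n : Fin N) :
    StokesMatrix N 1 s m n = if m = n then 1
      else if (m : ℕ) = 1 ∧ (n : ℕ) = 0 then s (-1)
      else if (m : ℕ) + n = N + 1 ∧ N + 2 ≤ 2 * (n : ℕ) then s ((N : ℤ) - 2 * m + 1) else 0 := by
  have hm := m.isLt
  have hn := n.isLt
  have key : (((m : ℤ) + (n : ℤ) - ((1 : ℕ) : ℤ)) % (N : ℤ) = 0 ∧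
      1 ≤ (((1 : ℕ) : ℤ) - 2 * (n : ℤ)) % (2 * (N : ℤ)) ∧
      (((1 : ℕ) : ℤ) - 2 * (n : ℤ)) % (2 * (N : ℤ)) ≤ (N : ℤ) - 1) ↔
      (((m : ℕ) = 1 ∧ (n : ℕ) = 0) ∨ ((m : ℕ) + n = N + 1 ∧ N + 2 ≤ 2 * (n : ℕ))) := by
    have h2 : ((m : ℤ) + (n : ℤ) - ((1 : ℕ) : ℤ)) % (N : ℤ) = 0 ↔
        ((m : ℕ) + n = 1 ∨ (m : ℕ) + n = N + 1) := by
      constructor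
      · intro h
        by_contra hne
        rcases Nat.eq_zero_or_pos ((m : ℕ) + n) with h0 | h0
        · rw [← Int.add_emod_right, Int.emod_eq_of_lt] at h <;> push_cast at * <;> omega
        rcases lt_or_ge ((m : ℕ) + n) (N + 1) with hlt | hgt
        · rw [Int.emod_eq_of_lt] at h <;> push_cast at * <;> omega
        · rw [← Int.sub_emod_right, Int.emod_eq_of_lt] at h <;> push_cast at * <;> omega
      · rintro (h | h)
        · have : (m : ℤ) + (n : ℤ) - ((1 : ℕ) : ℤ) = 0 := by push_cast; omega
          rw [this, Int.zero_emod]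
        · have : (m : ℤ) + (n : ℤ) - ((1 : ℕ) : ℤ) = N := by push_cast; omega
          rw [this, Int.emod_self]
    rw [h2]
    rcases Nat.eq_zero_or_pos (n : ℕ) with h0 | h0
    · have h1 : (((1 : ℕ) : ℤ) - 2 * (n : ℤ)) % (2 * (N : ℤ)) = 1 := by
        rw [Int.emod_eq_of_lt] <;> push_cast <;> omega
      rw [h1]
      omega
    · have h1 : (((1 : ℕ) : ℤ) - 2 * (n : ℤ)) % (2 * (N : ℤ)) = 2 * N - 2 * n + 1 := by
        rw [← Int.add_emod_right, Int.emod_eq_of_lt] <;> push_cast <;> omega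
      rw [h1]
      omega
  simp only [StokesMatrix, Matrix.of_apply]
  simp only [key]
  split_ifs with h1 h2 h3 h4 h5 <;> first | rfl | (exfalso; omega) | (congr 1; omega)

theorem stokes_mul (N : ℕ) (hN : 2 ≤ N) (s : ℤ → ℂ) :
    StokesMatrix N 0 s * StokesMatrix N 1 s = StokesMatrix N 0 s + StokesMatrix N 1 s - 1 := by
  have h : (StokesMatrix N 0 s - 1) * (StokesMatrix N 1 s - 1) = 0 := by
    ext i j
    rw [Matrix.mul_apply, Matrix.zero_apply]
    refine Finset.sum_eq_zero fun k _ => ?_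
    have hi := i.isLt
    have hj := j.isLt
    have hk := k.isLt
    rw [Matrix.sub_apply, Matrix.sub_apply, stokes_zero_apply, stokes_one_apply N hN,
      Matrix.one_apply, Matrix.one_apply]
    split_ifs <;> first | (exfalso; omega) | simp
  rw [sub_mul, mul_sub, mul_sub, one_mul, mul_one, one_mul] at h
  rw [← sub_eq_zero, ← h]
  abel

theorem mul_permMat_apply (N : ℕ) (hN : 2 ≤ N) (X : Matrix (Fin N) (Fin N) ℂ) (i j : Fin N) :
    (X * PermMat N) i j = if h : (j : ℕ) + 1 < N then X i ⟨j + 1, h⟩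
      else X i ⟨0, by omega⟩ * (-1) ^ (N - 1) := by
  have hj := j.isLt
  rw [Matrix.mul_apply]
  split_ifs with h
  · rw [Finset.sum_eq_single ⟨(j : ℕ) + 1, h⟩]
    · simp [PermMat]
    · intro b _ hb
      have h1 : ¬ (b : ℕ) = j + 1 := fun e => hb (Fin.ext e)
      have h2 : ¬ ((b : ℕ) = 0 ∧ (j : ℕ) = N - 1) := by omega
      simp only [PermMat, Matrix.of_apply, if_neg h1, if_neg h2, mul_zero]
    · simp
  · rw [Finset.sum_eq_single ⟨0, by omega⟩]
    · have h2 : (j : ℕ) = N - 1 := by omega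
      simp [PermMat, h2]
    · intro b _ hb
      have hb' := b.isLt
      have h1 : ¬ (b : ℕ) = j + 1 := by omega
      have h2 : ¬ ((b : ℕ) = 0 ∧ (j : ℕ) = N - 1) := fun e => hb (Fin.ext e.1)
      simp only [PermMat, Matrix.of_apply, if_neg h1, if_neg h2, mul_zero]
    · simp

/-- `𝒮_0 · 𝒮_1 · P_N = M_0`, for arbitrary Stokes constants `s_1,…,s_{N−1}`
extended to negative indices by `s_{i−N} = (−1)^{N−1} s_i`. -/
theorem stokes_product_equals_monodromy
    (N : ℕ) (hN : 2 ≤ N) (s : ℤ → ℂ)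
    (hs : ∀ i : ℤ, 1 ≤ i → i ≤ (N : ℤ) - 1 →
      s (i - (N : ℤ)) = (-1 : ℂ) ^ (N - 1) * s i) :
    StokesMatrix N 0 s * StokesMatrix N 1 s * PermMat N = MonodromyMat N s := by
  have hsgn : s (-1) * (-1 : ℂ) ^ (N - 1) = s ((N : ℤ) - 1) := by
    have h := hs ((N : ℤ) - 1) (by omega) le_rfl
    rw [show (N : ℤ) - 1 - N = -1 by ring] at h
    rw [h, mul_right_comm, ← mul_pow]
    simp
  ext i j
  have hi := i.isLt
  have hj := j.isLt
  rw [stokes_mul N hN, mul_permMat_apply N hN]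
  simp only [Matrix.sub_apply, Matrix.add_apply, stokes_zero_apply, stokes_one_apply N hN,
    Matrix.one_apply, MonodromyMat, Matrix.of_apply, Fin.ext_iff]
  by_cases hl : (j : ℕ) + 1 < N
  · simp only [dif_pos hl, Nat.succ_ne_zero, and_false, if_false]
    split_ifs <;> first | (exfalso; omega) | simp
  · simp only [dif_neg hl, and_true]
    -- Off row `0`, the only nonzero entry of the last column is `s (-1)` times the sign, in row `1`.
    split_ifs <;> first
      | (exfalso; omega)
      | (simp; done)
      | (simp only [zero_add, sub_zero, hsgn]; congr 1; omega)
end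

section
/- Let N ≥ 2 be an integer and let s_1,…,s_{N−1} ∈ ℂ. Then the characteristic polynomial of the explicit monodromy matrix M_0 is det(λ·I − M_0) = λ^N − ∑_{i=1}^{N−1} s_i·λ^{N−i} + (−1)^N. In particular det M_0 = 1. -/
/-- Coordinate `k` of the vector obtained by back-substitution, for matrix size `n + 1`. -/
noncomputable def backVec (n : ℕ) (s : ℤ → ℂ) (lam : ℂ) (k : ℕ) : ℂ :=
  lam ^ (n - k) - ∑ m ∈ Finset.Ico (2 * k + 1) (n + 1), s ((n : ℤ) + 1 - m) * lam ^ (m - 1 - k)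

/-- On the second half of the indices no Stokes constant has entered yet. -/
lemma backVec_of_le (n : ℕ) (s : ℤ → ℂ) (lam : ℂ) (k : ℕ) (hk : n ≤ 2 * k) :
    backVec n s lam k = lam ^ (n - k) := by
  rw [backVec, Finset.Ico_eq_empty (by omega)]
  simp

lemma mul_backVec (n : ℕ) (s : ℤ → ℂ) (lam : ℂ) (k : ℕ) (hk : k ≤ n) :
    lam * backVec n s lam k = lam ^ (n + 1 - k) -
      ∑ m ∈ Finset.Ico (2 * k + 1) (n + 1), s ((n : ℤ) + 1 - m) * lam ^ (m - k) := by
  rw [backVec, mul_sub, ← pow_succ', Finset.mul_sum, show n - k + 1 = n + 1 - k by omega]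
  congr 1
  refine Finset.sum_congr rfl fun m hm => ?_
  rw [Finset.mem_Ico] at hm
  rw [show m - k = m - 1 - k + 1 by omega]
  ring

/-- The recursion solved by back-substitution; the two conditions say that the respective
Stokes entry of row `k + 1` exists. -/
lemma backVec_rec (n : ℕ) (s : ℤ → ℂ) (lam : ℂ) (k : ℕ) (hk : k + 1 ≤ n) :
    backVec n s lam k = lam * backVec n s lam (k + 1)
      - (if 2 * (k + 1) ≤ n then s ((n : ℤ) + 1 - 2 * ((k : ℤ) + 1)) * lam ^ (k + 1) else 0)
      - (if 2 * (k + 1) ≤ n + 1 then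
          s ((n : ℤ) + 1 - 2 * ((k : ℤ) + 1) + 1) * lam ^ k else 0) := by
  have e (m : ℕ) : m - 1 - k = m - (k + 1) := by omega
  rw [mul_backVec n s lam (k + 1) hk, backVec, show n + 1 - (k + 1) = n - k by omega]
  simp only [e]
  by_cases h1 : 2 * (k + 1) ≤ n
  · rw [Finset.sum_eq_sum_Ico_succ_bot (by omega), Finset.sum_eq_sum_Ico_succ_bot (by omega),
      if_pos h1, if_pos (by omega), show 2 * k + 1 - (k + 1) = k by omega,
      show 2 * k + 1 + 1 - (k + 1) = k + 1 by omega,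
      show 2 * k + 1 + 1 + 1 = 2 * (k + 1) + 1 by omega]
    push_cast
    ring_nf
  · rw [if_neg h1, Finset.Ico_eq_empty (a := 2 * (k + 1) + 1) (by omega)]
    by_cases h2 : 2 * (k + 1) ≤ n + 1
    · rw [if_pos h2, Finset.sum_eq_sum_Ico_succ_bot (by omega), Finset.Ico_eq_empty (by omega),
        show 2 * k + 1 - (k + 1) = k by omega]
      push_cast
      simp only [Finset.sum_empty]
      ring_nf
    · rw [if_neg h2, Finset.Ico_eq_empty (by omega)]
      simp

lemma monodromy_row_zero (n : ℕ) (s : ℤ → ℂ) (j : Fin (n + 1)) :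
    MonodromyMat (n + 1) s 0 j = if (j : ℕ) = n then (-1) ^ n else 0 := by
  simp [MonodromyMat]

/-- The nonzero entries of row `k + 1`; their positions are pairwise distinct whenever the
corresponding conditions hold, so the row is the sum of its three one-entry pieces. -/
lemma monodromy_row_succ (n : ℕ) (s : ℤ → ℂ) (k : ℕ) (hk : k + 1 < n + 1) (j : Fin (n + 1)) :
    MonodromyMat (n + 1) s ⟨k + 1, hk⟩ j =
      (if (j : ℕ) = k then 1 else 0)
      + (if (j : ℕ) = n - (k + 1) then
          (if 2 * (k + 1) ≤ n then s ((n : ℤ) + 1 - 2 * ((k : ℤ) + 1)) else 0) else 0)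
      + (if (j : ℕ) = n - k then
          (if 2 * (k + 1) ≤ n + 1 then s ((n : ℤ) + 1 - 2 * ((k : ℤ) + 1) + 1) else 0) else 0) := by
  simp only [MonodromyMat, Matrix.of_apply, Nat.cast_add, Nat.cast_one]
  split_ifs <;> first | omega | (simp; done) | simp_all

lemma monodromy_mulVec_zero (n : ℕ) (s : ℤ → ℂ) (x : ℕ → ℂ) :
    (MonodromyMat (n + 1) s).mulVec (fun j => x j) 0 = (-1) ^ n * x n := by
  simp only [Matrix.mulVec, dotProduct, monodromy_row_zero]
  rw [Fin.sum_univ_eq_sum_range (fun j => (if j = n then (-1 : ℂ) ^ n else 0) * x j)]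
  simp [ite_mul]

lemma monodromy_mulVec_succ (n : ℕ) (s : ℤ → ℂ) (x : ℕ → ℂ) (k : ℕ) (hk : k + 1 < n + 1) :
    (MonodromyMat (n + 1) s).mulVec (fun j => x j) ⟨k + 1, hk⟩ = x k
      + (if 2 * (k + 1) ≤ n then s ((n : ℤ) + 1 - 2 * ((k : ℤ) + 1)) else 0) * x (n - (k + 1))
      + (if 2 * (k + 1) ≤ n + 1 then
          s ((n : ℤ) + 1 - 2 * ((k : ℤ) + 1) + 1) else 0) * x (n - k) := by
  simp only [Matrix.mulVec, dotProduct, monodromy_row_succ]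
  generalize (if 2 * (k + 1) ≤ n then s ((n : ℤ) + 1 - 2 * ((k : ℤ) + 1)) else 0) = a
  generalize (if 2 * (k + 1) ≤ n + 1 then s ((n : ℤ) + 1 - 2 * ((k : ℤ) + 1) + 1) else 0) = b
  rw [Fin.sum_univ_eq_sum_range (fun j => ((if j = k then (1 : ℂ) else 0)
    + (if j = n - (k + 1) then a else 0) + (if j = n - k then b else 0)) * x j)]
  simp only [add_mul, ite_mul, zero_mul, one_mul, Finset.sum_add_distrib, Finset.sum_ite_eq',
    Finset.mem_range]
  rw [if_pos (by omega), if_pos (by omega), if_pos (by omega)]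

/-- The constant `c` of `A x = c e_0`. -/
noncomputable def charValue (n : ℕ) (s : ℤ → ℂ) (lam : ℂ) : ℂ :=
  lam * backVec n s lam 0 - (-1) ^ n

lemma charMat_mulVec_backVec (n : ℕ) (s : ℤ → ℂ) (lam : ℂ) :
    (lam • (1 : Matrix (Fin (n + 1)) (Fin (n + 1)) ℂ) - MonodromyMat (n + 1) s).mulVec
      (fun j => backVec n s lam j) = Pi.single 0 (charValue n s lam) := by
  funext i
  rw [Matrix.sub_mulVec, Matrix.smul_mulVec, Matrix.one_mulVec, Pi.sub_apply, Pi.smul_apply,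
    smul_eq_mul]
  obtain ⟨i, hi⟩ := i
  cases i with
  | zero =>
    have h := monodromy_mulVec_zero n s (backVec n s lam)
    rw [backVec_of_le n s lam n (by omega)] at h
    simp only [Fin.mk_zero, Pi.single_eq_same, h, charValue]
    simp
  | succ k =>
    rw [monodromy_mulVec_succ n s (backVec n s lam), Pi.single_eq_of_ne (by simp [Fin.ext_iff]),
      backVec_rec n s lam k (by omega)]
    by_cases h1 : 2 * (k + 1) ≤ n
    · rw [if_pos h1, if_pos h1, if_pos (by omega), if_pos (by omega),
        backVec_of_le n s lam (n - (k + 1)) (by omega),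
        backVec_of_le n s lam (n - k) (by omega),
        show n - (n - (k + 1)) = k + 1 by omega, show n - (n - k) = k by omega]
      ring
    · rw [if_neg h1, if_neg h1]
      by_cases h2 : 2 * (k + 1) ≤ n + 1
      · rw [if_pos h2, if_pos h2, backVec_of_le n s lam (n - k) (by omega),
          show n - (n - k) = k by omega]
        ring
      · rw [if_neg h2, if_neg h2]
        ring

/-- Deleting row `0` and the last column leaves an upper triangular matrix with diagonal `-1`. -/
lemma adjugate_charMat_last_zero (n : ℕ) (s : ℤ → ℂ) (lam : ℂ) :
    (lam • (1 : Matrix (Fin (n + 1)) (Fin (n + 1)) ℂ) - MonodromyMat (n + 1) s).adjugate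
      (Fin.last n) 0 = 1 := by
  rw [Matrix.adjugate_fin_succ_eq_det_submatrix, Matrix.det_of_isUpperTriangular]
  · have h (i : Fin n) : ((lam • (1 : Matrix (Fin (n + 1)) (Fin (n + 1)) ℂ)
        - MonodromyMat (n + 1) s).submatrix (Fin.succAbove 0) (Fin.succAbove (Fin.last n))) i i
          = -1 := by
      have : Fin.succ i ≠ Fin.castSucc i := by simp [Fin.ext_iff]
      simp [MonodromyMat, this]
    simp only [h]
    simp [← mul_pow]
  · intro i j hij
    have hij' : (j : ℕ) < i := hij
    have h1 : Fin.succ i ≠ Fin.castSucc j := by simp [Fin.ext_iff]; omega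
    have h2 := monodromy_row_succ n s i (by omega) (Fin.castSucc j)
    have h3 : (⟨i + 1, by omega⟩ : Fin (n + 1)) = Fin.succ i := rfl
    rw [h3] at h2
    simp only [Fin.val_castSucc] at h2
    simp only [Matrix.submatrix_apply, Fin.zero_succAbove, Fin.succAbove_last, Matrix.sub_apply,
      Matrix.smul_apply, Matrix.one_apply, if_neg h1, h2]
    split_ifs <;> first | omega | simp

lemma det_charMat (n : ℕ) (s : ℤ → ℂ) (lam : ℂ) :
    (lam • (1 : Matrix (Fin (n + 1)) (Fin (n + 1)) ℂ) - MonodromyMat (n + 1) s).det =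
      charValue n s lam := by
  have h := congrArg (fun v =>
    (lam • (1 : Matrix (Fin (n + 1)) (Fin (n + 1)) ℂ) - MonodromyMat (n + 1) s).adjugate.mulVec v
      (Fin.last n)) (charMat_mulVec_backVec n s lam)
  simp only [Matrix.mulVec_mulVec, Matrix.adjugate_mul, Matrix.smul_mulVec, Matrix.one_mulVec,
    Matrix.mulVec_single, Pi.smul_apply, Matrix.col_apply, adjugate_charMat_last_zero,
    Fin.val_last] at h
  rw [backVec_of_le n s lam n (by omega)] at h
  simpa using h

lemma charValue_eq (n : ℕ) (s : ℤ → ℂ) (lam : ℂ) :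
    charValue n s lam = lam ^ (n + 1)
      - (∑ i ∈ Finset.Icc 1 n, s (i : ℤ) * lam ^ (n + 1 - i)) + (-1) ^ (n + 1) := by
  rw [charValue, mul_backVec n s lam 0 (by omega)]
  have : ∑ m ∈ Finset.Ico (2 * 0 + 1) (n + 1), s ((n : ℤ) + 1 - m) * lam ^ (m - 0)
      = ∑ i ∈ Finset.Icc 1 n, s (i : ℤ) * lam ^ (n + 1 - i) := by
    refine Finset.sum_nbij' (fun m => n + 1 - m) (fun m => n + 1 - m) ?_ ?_ ?_ ?_ ?_
    all_goals
      intro m hm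
      simp only [Finset.mem_Ico, Finset.mem_Icc] at hm ⊢
    · omega
    · omega
    · omega
    · omega
    · rw [show n + 1 - (n + 1 - m) = m - 0 by omega, Nat.cast_sub (by omega)]
      push_cast
      rfl
  rw [this, pow_succ (-1 : ℂ) n, Nat.sub_zero]
  ring

/-- the characteristic polynomial of the explicit monodromy matrix is
`det(λ·I − M_0) = λ^N − ∑_{i=1}^{N−1} s_i λ^{N−i} + (−1)^N`; in particular `det M_0 = 1`. -/
theorem monodromy_charpoly
    (N : ℕ) (hN : 2 ≤ N) (s : ℤ → ℂ) :
    (∀ lam : ℂ,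
      (lam • (1 : Matrix (Fin N) (Fin N) ℂ) - MonodromyMat N s).det =
        lam ^ N - (∑ i ∈ Finset.Icc 1 (N - 1), s (i : ℤ) * lam ^ (N - i)) + (-1 : ℂ) ^ N) ∧
    (MonodromyMat N s).det = 1 := by
  obtain ⟨n, rfl⟩ : ∃ n, N = n + 1 := ⟨N - 1, by omega⟩
  have key : ∀ lam : ℂ,
      (lam • (1 : Matrix (Fin (n + 1)) (Fin (n + 1)) ℂ) - MonodromyMat (n + 1) s).det =
        lam ^ (n + 1) - (∑ i ∈ Finset.Icc 1 n, s (i : ℤ) * lam ^ (n + 1 - i))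
          + (-1 : ℂ) ^ (n + 1) := fun lam => by
    rw [det_charMat, charValue_eq]
  refine ⟨key, ?_⟩
  -- At `lam = 0` only the constant term survives, and `det (-M_0) = (-1)^N det M_0`.
  have h0 := key 0
  have hs : ∑ i ∈ Finset.Icc 1 n, s (i : ℤ) * (0 : ℂ) ^ (n + 1 - i) = 0 := by
    refine Finset.sum_eq_zero fun i hi => ?_
    rw [Finset.mem_Icc] at hi
    rw [zero_pow (by omega), mul_zero]
  rw [hs, zero_smul, zero_sub, Matrix.det_neg, Fintype.card_fin, zero_pow (by omega), sub_zero,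
    zero_add] at h0
  exact mul_left_cancel₀ (pow_ne_zero (n + 1) (neg_ne_zero.mpr one_ne_zero))
    (h0.trans (mul_one _).symm)
end

section
/- Let N ≥ 2 be an integer, let s_1,…,s_{N−1} ∈ ℂ, and let Σ_1,…,Σ_N ∈ ℂ. If the characteristic polynomial of the explicit monodromy matrix M_0 factors as det(λ·I − M_0) = ∏_{j=1}^N (λ − Σ_j), then s_i = (−1)^{i+1}·e_i(Σ_1,…,Σ_N) for every i = 1,…,N−1, and ∏_{j=1}^N Σ_j = 1, where e_i denotes the elementary symmetric polynomial of degree i in N variables. -/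
/-- A vector with last entry `1` that an upper Hessenberg matrix with subdiagonal `-1` sends to
`p e_0` computes the determinant. -/
lemma det_of_hessenberg (n : ℕ) (A : Matrix (Fin (n + 1)) (Fin (n + 1)) ℂ)
    (hsub : ∀ i j : Fin (n + 1), (i : ℕ) = j + 1 → A i j = -1)
    (hlow : ∀ i j : Fin (n + 1), (j : ℕ) + 1 < i → A i j = 0)
    (v : Fin (n + 1) → ℂ) (hv : v (Fin.last n) = 1) (p : ℂ)
    (hAv : A.mulVec v = Pi.single 0 p) : A.det = p := by
  have h1 : (A.adjugate.mulVec (A.mulVec v)) (Fin.last n) = A.det := by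
    rw [Matrix.mulVec_mulVec, Matrix.adjugate_mul, Matrix.smul_mulVec, Matrix.one_mulVec]
    simp [hv]
  have h2 : (A.submatrix Fin.succ Fin.castSucc).det = (-1) ^ n := by
    rw [Matrix.det_of_isUpperTriangular]
    · simp [hsub]
    · intro i j hij
      apply hlow
      simpa using hij
  have h3 : A.adjugate (Fin.last n) 0 = 1 := by
    rw [Matrix.adjugate_fin_succ_eq_det_submatrix]
    have e1 : (Fin.succAbove (0 : Fin (n + 1))) = Fin.succ := by ext; simp
    have e2 : (Fin.succAbove (Fin.last n)) = Fin.castSucc := by ext; simp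
    rw [e1, e2, h2]
    simp [← mul_pow]
  rw [hAv] at h1
  rw [← h1]
  simp [h3]

/-- The coordinates of the vector that `λ - M_0` sends to a multiple of `e_0`, as a function of a
natural-number index; only indices below `N` matter. Truncated subtraction makes the sum empty
when `N - 1 ≤ 2 i`. -/
noncomputable def hessVec (N : ℕ) (s : ℤ → ℂ) (lam : ℂ) (i : ℕ) : ℂ :=
  lam ^ (N - 1 - i) - ∑ k ∈ Finset.Icc 1 (N - 1 - 2 * i), s (k : ℤ) * lam ^ (N - 1 - i - k)

lemma hessVec_of_large (N : ℕ) (s : ℤ → ℂ) (lam : ℂ) (i : ℕ) (h : N - 1 ≤ 2 * i) :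
    hessVec N s lam i = lam ^ (N - 1 - i) := by
  have : N - 1 - 2 * i = 0 := by omega
  simp [hessVec, this]

lemma sum_fin_ite (N a : ℕ) (ha : a < N) (f : ℕ → ℂ) :
    ∑ j : Fin N, (if (j : ℕ) = a then f j else 0) = f a := by
  rw [Fin.sum_univ_eq_sum_range (fun j => if j = a then f j else 0) N]
  simp [ha]

lemma mul_hessVec (N : ℕ) (s : ℤ → ℂ) (lam : ℂ) (i : ℕ) (hi : i < N) :
    lam * hessVec N s lam i =
      lam ^ (N - i) - ∑ k ∈ Finset.Icc 1 (N - 1 - 2 * i), s (k : ℤ) * lam ^ (N - i - k) := by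
  rw [hessVec, mul_sub, Finset.mul_sum]
  congr 1
  · rw [← pow_succ']; congr 1; omega
  · refine Finset.sum_congr rfl fun k hk => ?_
    rw [Finset.mem_Icc] at hk
    rw [mul_left_comm, ← pow_succ']; congr 2; omega

/-- The recursion for `hessVec` read off from row `i ≥ 1`; the powers of `λ` multiplying the Stokes
constants are the coordinates `N - 1 - i` and `N - i`. -/
lemma hessVec_rec (N : ℕ) (s : ℤ → ℂ) (lam : ℂ) (i : ℕ) (h1 : 1 ≤ i) (hi : i < N) :
    lam * hessVec N s lam i = hessVec N s lam (i - 1)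
      + (if i ≤ (N - 1) / 2 then
          s ((N : ℤ) - 2 * (i : ℤ)) * hessVec N s lam (N - 1 - i) else 0)
      + (if i ≤ N / 2 then
          s ((N : ℤ) - 2 * (i : ℤ) + 1) * hessVec N s lam (N - i) else 0) := by
  rw [mul_hessVec N s lam i hi]
  have hp : N - 1 - (i - 1) = N - i := by omega
  by_cases hA : i ≤ (N - 1) / 2
  · have hB : i ≤ N / 2 := by omega
    rw [if_pos hA, if_pos hB, hessVec_of_large N s lam (N - 1 - i) (by omega),
      hessVec_of_large N s lam (N - i) (by omega), hessVec, hp]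
    obtain ⟨m, hm⟩ : ∃ m, N = 2 * i + 1 + m := ⟨N - (2 * i + 1), by omega⟩
    have e1 : N - 1 - 2 * (i - 1) = m + 2 := by omega
    have e2 : N - 1 - 2 * i = m := by omega
    have e3 : (N : ℤ) - 2 * (i : ℤ) = ((m + 1 : ℕ) : ℤ) := by push_cast; omega
    have e4 : ((m + 1 : ℕ) : ℤ) + 1 = ((m + 1 + 1 : ℕ) : ℤ) := by push_cast; ring
    have e5 : N - 1 - (N - 1 - i) = N - i - (m + 1) := by omega
    have e6 : N - 1 - (N - i) = N - i - (m + 1 + 1) := by omega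
    rw [e1, e2, e3, e4, e5, e6, Finset.sum_Icc_succ_top (by omega),
      Finset.sum_Icc_succ_top (by omega)]
    ring
  · by_cases hB : i ≤ N / 2
    · -- Here `N = 2 i`, so only the entry `s_1` on the diagonal survives.
      obtain rfl : N = 2 * i := by omega
      rw [if_neg hA, if_pos hB, hessVec_of_large _ s lam (2 * i - i) (by omega), hessVec, hp]
      have e1 : 2 * i - 1 - 2 * (i - 1) = 1 := by omega
      have e2 : 2 * i - 1 - 2 * i = 0 := by omega
      have e3 : ((2 * i : ℕ) : ℤ) - 2 * (i : ℤ) + 1 = 1 := by push_cast; omega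
      have e4 : 2 * i - 1 - (2 * i - i) = 2 * i - i - 1 := by omega
      rw [e1, e2, e3, e4]
      simp
    · rw [if_neg hA, if_neg hB, hessVec_of_large N s lam (i - 1) (by omega), hp]
      have e2 : N - 1 - 2 * i = 0 := by omega
      simp [e2]

lemma monodromyMat_mulVec_zero (n : ℕ) (s : ℤ → ℂ) (w : ℕ → ℂ) :
    (MonodromyMat (n + 1) s).mulVec (fun j => w j) 0 = (-1) ^ n * w n := by
  rw [← sum_fin_ite (n + 1) n (by omega) (fun j => (-1) ^ n * w j)]
  rw [Matrix.mulVec, dotProduct]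
  refine Finset.sum_congr rfl fun j _ => ?_
  simp [MonodromyMat]

lemma monodromyMat_mulVec (N : ℕ) (s : ℤ → ℂ) (w : ℕ → ℂ) (i : Fin N) (h1 : 1 ≤ (i : ℕ)) :
    (MonodromyMat N s).mulVec (fun j => w j) i = w (i - 1)
      + (if (i : ℕ) ≤ (N - 1) / 2 then s ((N : ℤ) - 2 * (i : ℤ)) * w (N - 1 - i) else 0)
      + (if (i : ℕ) ≤ N / 2 then s ((N : ℤ) - 2 * (i : ℤ) + 1) * w (N - i) else 0) := by
  have hi := i.2
  rw [← sum_fin_ite N (i - 1) (by omega) w,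
    ← sum_fin_ite N (N - 1 - i) (by omega)
      (fun j => if (i : ℕ) ≤ (N - 1) / 2 then s ((N : ℤ) - 2 * (i : ℤ)) * w j else 0),
    ← sum_fin_ite N (N - i) (by omega)
      (fun j => if (i : ℕ) ≤ N / 2 then s ((N : ℤ) - 2 * (i : ℤ) + 1) * w j else 0),
    ← Finset.sum_add_distrib, ← Finset.sum_add_distrib]
  rw [Matrix.mulVec, dotProduct]
  refine Finset.sum_congr rfl fun j _ => ?_
  simp only [MonodromyMat, Matrix.of_apply]
  split_ifs <;> first | omega | simp

lemma det_sub_monodromyMat (N : ℕ) (hN : 2 ≤ N) (s : ℤ → ℂ) (lam : ℂ) :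
    (lam • (1 : Matrix (Fin N) (Fin N) ℂ) - MonodromyMat N s).det =
      lam ^ N - ∑ k ∈ Finset.Icc 1 (N - 1), s (k : ℤ) * lam ^ (N - k) + (-1) ^ N := by
  obtain ⟨n, rfl⟩ : ∃ n, N = n + 1 := ⟨N - 1, by omega⟩
  refine det_of_hessenberg n _ ?_ ?_ (fun j => hessVec (n + 1) s lam j) ?_ _ ?_
  · intro i j h
    have hij : i ≠ j := by rintro rfl; omega
    have h0 : ¬ ((i : ℕ) = 0 ∧ (j : ℕ) = n + 1 - 1) := by omega
    simp only [Matrix.sub_apply, Matrix.smul_apply, Matrix.one_apply_ne hij, MonodromyMat,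
      Matrix.of_apply, if_neg h0, if_pos h]
    simp
  · intro i j h
    have hij : i ≠ j := by rintro rfl; omega
    simp only [Matrix.sub_apply, Matrix.smul_apply, Matrix.one_apply_ne hij, MonodromyMat,
      Matrix.of_apply]
    split_ifs <;> first | omega | simp
  · rw [Fin.val_last, hessVec_of_large _ _ _ _ (by omega)]
    simp
  · rw [Matrix.sub_mulVec, Matrix.smul_mulVec, Matrix.one_mulVec]
    ext i
    rw [Pi.sub_apply, Pi.smul_apply, smul_eq_mul]
    by_cases h0 : i = 0
    · subst h0
      rw [monodromyMat_mulVec_zero, Fin.val_zero, mul_hessVec _ _ _ _ (by omega),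
        hessVec_of_large _ _ _ n (by omega)]
      simp [pow_succ, sub_eq_add_neg]
    · have h1 : 1 ≤ (i : ℕ) := by
        have := Fin.val_ne_zero_iff.mpr h0
        omega
      rw [monodromyMat_mulVec _ _ _ _ h1, hessVec_rec _ _ _ _ h1 i.2, Pi.single_eq_of_ne h0]
      ring

/-- if the characteristic polynomial of `M_0` factors as
`∏_{j=1}^N (λ − Σ_j)`, then the Stokes constants are the (signed) elementary symmetric
polynomials of the monodromy eigenvalues, `s_i = (−1)^{i+1} e_i(Σ)`, and `∏_j Σ_j = 1`. -/
theorem stokes_constants_from_monodromy_eigenvalues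
    (N : ℕ) (hN : 2 ≤ N) (s : ℤ → ℂ) (Sig : Fin N → ℂ)
    (hfac : ∀ lam : ℂ,
      (lam • (1 : Matrix (Fin N) (Fin N) ℂ) - MonodromyMat N s).det =
        ∏ j, (lam - Sig j)) :
    (∀ i : ℕ, 1 ≤ i → i ≤ N - 1 →
      s (i : ℤ) = (-1 : ℂ) ^ (i + 1) *
        ∑ S ∈ Finset.powersetCard i (Finset.univ : Finset (Fin N)), ∏ j ∈ S, Sig j) ∧
    ∏ j, Sig j = 1 := by
  open Polynomial in
  have hpoly : (X ^ N - ∑ k ∈ Finset.Icc 1 (N - 1), C (s (k : ℤ)) * X ^ (N - k) + C ((-1) ^ N)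
      : ℂ[X]) = ((Finset.univ.val.map Sig).map fun t => X - C t).prod := by
    apply Polynomial.funext
    intro lam
    have h := hfac lam
    rw [det_sub_monodromyMat N hN] at h
    rw [Multiset.map_map]
    change _ = eval lam (∏ j, (X - C (Sig j)))
    rw [eval_prod]
    simpa [eval_finsetSum] using h
  have hcard : (Finset.univ.val.map Sig).card = N := by simp
  have hcoeff : ∀ i ≤ N, (-1 : ℂ) ^ i *
      ∑ S ∈ Finset.powersetCard i (Finset.univ : Finset (Fin N)), ∏ j ∈ S, Sig j =
      (if i = 0 then 1 else 0) - (if 1 ≤ i ∧ i ≤ N - 1 then s (i : ℤ) else 0)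
        + (if i = N then (-1) ^ N else 0) := by
    intro i hi
    have h := congrArg (fun q => Polynomial.coeff q (N - i)) hpoly
    rw [Multiset.prod_X_sub_C_coeff _ (by rw [hcard]; omega), hcard,
      show N - (N - i) = i by omega, Finset.esymm_map_val] at h
    rw [← h]
    simp only [Polynomial.coeff_add, Polynomial.coeff_sub, Polynomial.finsetSum_coeff,
      Polynomial.coeff_C_mul, Polynomial.coeff_X_pow, Polynomial.coeff_C]
    congr 1
    · congr 1
      · congr 1
        exact propext (by omega)
      · have : ∀ k ∈ Finset.Icc 1 (N - 1), s (k : ℤ) * (if N - i = N - k then 1 else 0)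
            = if k = i then s (k : ℤ) else 0 := by
          intro k hk
          rw [Finset.mem_Icc] at hk
          have : N - i = N - k ↔ k = i := by omega
          simp [this]
        rw [Finset.sum_congr rfl this, Finset.sum_ite_eq']
        simp only [Finset.mem_Icc]
    · congr 1
      exact propext (by omega)
  constructor
  · intro i h1 h2
    have h := hcoeff i (by omega)
    rw [if_neg (by omega), if_pos ⟨h1, h2⟩, if_neg (by omega)] at h
    rw [pow_succ, mul_neg_one, neg_mul, h]
    ring
  · have h := hcoeff N le_rfl
    rw [if_neg (by omega), if_neg (by omega), if_pos rfl] at h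
    have hps : Finset.powersetCard N (Finset.univ : Finset (Fin N)) = {Finset.univ} := by
      simpa using Finset.powersetCard_self (Finset.univ : Finset (Fin N))
    rw [hps, Finset.sum_singleton] at h
    have hne : (-1 : ℂ) ^ N ≠ 0 := by simp
    exact mul_left_cancel₀ hne (by rw [h]; ring)
end
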